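/- arXiv:2105.00395 — 4 statements merged into one kernel-verified Lean document; each statement's English description precedes it below -/
import Mathlib

section
/- Let T ∈ ℕ with T ≥ 1, r ∈ (0,1], δ ∈ (0,1), σ_n > 0, Q > 0, and let ε ∈ ℝ satisfy ε ≥ T ln(1 + 4r²) + ln(1/δ). Define β = (σ_n²/2) · ln((exp((ε − ln(1/δ))/T) − 1)/(2r²)) / Q and x = 2βQ/σ_n². Then β ≥ 0, x ≥ ln 2, and T · ln(1 + r² · min{4(exp(x) − 1), 2 exp(x)}) + ln(1/δ) = ε. -/
/-!
Put `u = (ε - log (1/δ)) / T` and `A = (exp u - 1) / (2 r²)`. The choice of `β` makes `x = log A`,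
and the lower bound on `ε` says exactly that `exp u ≥ 1 + 4 r²`, i.e. `A ≥ 2`. Hence
`exp x = A ≥ 2`, in which range the minimum of `4 (exp x - 1)` and `2 exp x` is the latter, and
`1 + 2 r² A = exp u`, so the privacy bound evaluates to `T u + log (1/δ) = ε`.
-/

theorem stmt8 (T : ℕ) (hT : 1 ≤ T) (r δ σn Q : ℝ)
    (hr : r ∈ Set.Ioc (0 : ℝ) 1) (hδ : δ ∈ Set.Ioo (0 : ℝ) 1)
    (hσ : 0 < σn) (hQ : 0 < Q) (ε : ℝ)
    (hε : T * Real.log (1 + 4 * r ^ 2) + Real.log (1 / δ) ≤ ε)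
    (β x : ℝ)
    (hβ : β = (σn ^ 2 / 2) *
      Real.log ((Real.exp ((ε - Real.log (1 / δ)) / T) - 1) / (2 * r ^ 2)) / Q)
    (hx : x = 2 * β * Q / σn ^ 2) :
    0 ≤ β ∧ Real.log 2 ≤ x ∧
      T * Real.log (1 + r ^ 2 * min (4 * (Real.exp x - 1)) (2 * Real.exp x)) +
        Real.log (1 / δ) = ε := by
  have hT' : (0 : ℝ) < T := by exact_mod_cast hT
  have hr0 : r ≠ 0 := hr.1.ne'
  have hr2 : 0 < r ^ 2 := pow_pos hr.1 2
  set L := Real.log (1 / δ) with hL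
  set u := (ε - L) / T with hu
  have hlog : Real.log (1 + 4 * r ^ 2) ≤ u := by
    rw [hu, le_div_iff₀ hT']
    linarith
  have hexp : 1 + 4 * r ^ 2 ≤ Real.exp u :=
    (Real.log_le_iff_le_exp (by positivity)).1 hlog
  set A := (Real.exp u - 1) / (2 * r ^ 2) with hA
  have hA2 : 2 ≤ A := by
    rw [hA, le_div_iff₀ (by positivity)]
    linarith
  have hxA : x = Real.log A := by
    rw [hx, hβ]
    field_simp
  have hex : Real.exp x = A := by
    rw [hxA, Real.exp_log (by linarith)]
  refine ⟨?_, ?_, ?_⟩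
  · have hlogA : 0 ≤ Real.log A := Real.log_nonneg (by linarith)
    rw [hβ]
    positivity
  · rw [hxA]
    exact Real.log_le_log (by norm_num) hA2
  · have hval : 1 + r ^ 2 * (2 * A) = Real.exp u := by
      rw [hA]
      field_simp
      ring
    rw [hex, min_eq_right (by linarith), hval, Real.log_exp, hu]
    field_simp
    ring
end

section
/- Let T ∈ ℕ with T ≥ 1, r ∈ (0,1], δ ∈ (0,1), σ_n > 0, Q > 0, and let ε ∈ ℝ satisfy ln(1/δ) < ε ≤ T ln(1 + 4r²) + ln(1/δ). Define β = (σ_n²/2) · ln((exp((ε − ln(1/δ))/T) − (1 − 4r²))/(4r²)) / Q and x = 2βQ/σ_n². Then β ≥ 0, x ≤ ln 2, and T · ln(1 + r² · min{4(exp(x) − 1), 2 exp(x)}) + ln(1/δ) = ε. -/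
/-!
Write `a = exp ((ε - log (1/δ)) / T)` and `y = (a - (1 - 4r²)) / (4r²)`. The two bounds on `ε` say
`1 < a ≤ 1 + 4r²`, that is `1 < y ≤ 2`. Since `x = log y`, this gives `0 ≤ β` and `x ≤ log 2`.
For `y ≤ 2` the minimum of `4(y - 1)` and `2y` is the former, so the argument of the logarithm is
`1 + 4r²(y - 1) = a`.
-/

theorem stmt9 (T : ℕ) (hT : 1 ≤ T) (r δ σn Q : ℝ)
    (hr : r ∈ Set.Ioc (0 : ℝ) 1) (hδ : δ ∈ Set.Ioo (0 : ℝ) 1)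
    (hσ : 0 < σn) (hQ : 0 < Q) (ε : ℝ)
    (hε₁ : Real.log (1 / δ) < ε)
    (hε₂ : ε ≤ T * Real.log (1 + 4 * r ^ 2) + Real.log (1 / δ))
    (β x : ℝ)
    (hβ : β = (σn ^ 2 / 2) *
      Real.log ((Real.exp ((ε - Real.log (1 / δ)) / T) - (1 - 4 * r ^ 2)) / (4 * r ^ 2)) / Q)
    (hx : x = 2 * β * Q / σn ^ 2) :
    0 ≤ β ∧ x ≤ Real.log 2 ∧
      T * Real.log (1 + r ^ 2 * min (4 * (Real.exp x - 1)) (2 * Real.exp x)) +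
        Real.log (1 / δ) = ε := by
  obtain ⟨hr0, -⟩ := hr
  have hT0 : (0 : ℝ) < T := by exact_mod_cast hT
  have hr2 : 0 < 4 * r ^ 2 := by positivity
  generalize Real.log (1 / δ) = L at *
  have ha1 : 1 < Real.exp ((ε - L) / T) :=
    Real.one_lt_exp_iff.mpr (div_pos (by linarith) hT0)
  have ha2 : Real.exp ((ε - L) / T) ≤ 1 + 4 * r ^ 2 := by
    rw [← Real.le_log_iff_exp_le (by positivity), div_le_iff₀ hT0]
    linarith
  have hlog : T * Real.log (Real.exp ((ε - L) / T)) + L = ε := by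
    rw [Real.log_exp]
    field_simp
    ring
  generalize Real.exp ((ε - L) / T) = a at *
  obtain ⟨y, hy⟩ : ∃ y, y = (a - (1 - 4 * r ^ 2)) / (4 * r ^ 2) := ⟨_, rfl⟩
  rw [← hy] at hβ
  have hy1 : 1 < y := by
    rw [hy, lt_div_iff₀ hr2]
    linarith
  have hy2 : y ≤ 2 := by
    rw [hy, div_le_iff₀ hr2]
    linarith
  have hay : 1 + r ^ 2 * (4 * (y - 1)) = a := by
    rw [hy]
    field_simp
    ring
  have hxy : x = Real.log y := by
    rw [hx, hβ]
    field_simp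
  have hlogy : 0 < Real.log y := Real.log_pos hy1
  refine ⟨?_, ?_, ?_⟩
  · rw [hβ]
    positivity
  · rw [hxy]
    exact Real.log_le_log (by linarith) hy2
  · rw [hxy, Real.exp_log (by linarith), min_eq_left (by linarith), hay, hlog]
end

section
/- Let T ∈ ℕ with T ≥ 1, r ∈ (0,1], δ ∈ (0,1), σ_n > 0, Q > 0, and define the piecewise power scaling factor β(ε) = (σ_n²/2)·ln((exp((ε − ln(1/δ))/T) − 1)/(2r²))/Q if ε ≥ T ln(1+4r²) + ln(1/δ), and β(ε) = (σ_n²/2)·ln((exp((ε − ln(1/δ))/T) − (1 − 4r²))/(4r²))/Q otherwise. Then β is monotone: for all ε₁, ε₂ with ln(1/δ) < ε₁ ≤ ε₂, β(ε₁) ≤ β(ε₂). -/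
/-!
With `x = exp ((ε - log (1/δ)) / T) > 1`, the threshold on `ε` is `1 + 4r² ≤ x`. Both pieces are
logarithms of positive increasing affine functions of `x`, and at the threshold both arguments
equal `2`, so the arguments are at most `2` below it and at least `2` above it.
-/

theorem stmt12 (T : ℕ) (hT : 1 ≤ T) (r δ σn Q : ℝ)
    (hr : r ∈ Set.Ioc (0 : ℝ) 1) (hδ : δ ∈ Set.Ioo (0 : ℝ) 1)
    (hσ : 0 < σn) (hQ : 0 < Q)
    (β : ℝ → ℝ)
    (hβ : ∀ ε : ℝ, β ε =
      if T * Real.log (1 + 4 * r ^ 2) + Real.log (1 / δ) ≤ ε then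
        (σn ^ 2 / 2) *
          Real.log ((Real.exp ((ε - Real.log (1 / δ)) / T) - 1) / (2 * r ^ 2)) / Q
      else
        (σn ^ 2 / 2) *
          Real.log ((Real.exp ((ε - Real.log (1 / δ)) / T) - (1 - 4 * r ^ 2)) / (4 * r ^ 2)) / Q) :
    ∀ ε₁ ε₂ : ℝ, Real.log (1 / δ) < ε₁ → ε₁ ≤ ε₂ → β ε₁ ≤ β ε₂ := by
  obtain ⟨hr0, -⟩ := hr
  have hT0 : (0 : ℝ) < T := by exact_mod_cast hT
  have hr2 : 0 < r ^ 2 := by positivity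
  intro ε₁ ε₂ h1 h12
  have hx1 : 1 < Real.exp ((ε₁ - Real.log (1 / δ)) / T) :=
    Real.one_lt_exp_iff.2 (div_pos (sub_pos.2 h1) hT0)
  have hx12 : Real.exp ((ε₁ - Real.log (1 / δ)) / T) ≤ Real.exp ((ε₂ - Real.log (1 / δ)) / T) := by
    gcongr
  have key : ∀ ε : ℝ, T * Real.log (1 + 4 * r ^ 2) + Real.log (1 / δ) ≤ ε ↔
      1 + 4 * r ^ 2 ≤ Real.exp ((ε - Real.log (1 / δ)) / T) := by
    intro ε
    rw [← Real.log_le_iff_le_exp (by positivity), le_div_iff₀ hT0, le_sub_iff_add_le, mul_comm]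
  simp only [hβ, key]
  generalize Real.exp ((ε₁ - Real.log (1 / δ)) / T) = x at *
  generalize Real.exp ((ε₂ - Real.log (1 / δ)) / T) = y at *
  split_ifs with ha hb hb
  · have : 0 < (x - 1) / (2 * r ^ 2) := div_pos (by linarith) (by positivity)
    gcongr
  · exact absurd (ha.trans hx12) hb
  · have : 0 < (x - (1 - 4 * r ^ 2)) / (4 * r ^ 2) := div_pos (by linarith) (by positivity)
    gcongr ?_ * Real.log ?_ / _
    -- The two pieces meet at the threshold, where both logarithm arguments equal 2.
    calc (x - (1 - 4 * r ^ 2)) / (4 * r ^ 2) ≤ 2 := by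
          rw [div_le_iff₀ (by positivity)]; linarith
      _ ≤ (y - 1) / (2 * r ^ 2) := by
          rw [le_div_iff₀ (by positivity)]; linarith
  · have : 0 < (x - (1 - 4 * r ^ 2)) / (4 * r ^ 2) := div_pos (by linarith) (by positivity)
    gcongr
end

section
/- Let T ∈ ℕ with T ≥ 1, r ∈ (0,1], σ_n > 0, Q > 0, ε ∈ ℝ, and define the piecewise power scaling factor β(δ) = (σ_n²/2)·ln((exp((ε − ln(1/δ))/T) − 1)/(2r²))/Q if ε ≥ T ln(1+4r²) + ln(1/δ), and β(δ) = (σ_n²/2)·ln((exp((ε − ln(1/δ))/T) − (1 − 4r²))/(4r²))/Q otherwise. Then for all δ₁, δ₂ with 0 < δ₁ ≤ δ₂ < 1 and ε > ln(1/δ₁), one has β(δ₁) ≤ β(δ₂). -/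
/-!
Write `E δ = exp ((ε - log (1/δ)) / T)`, which is nondecreasing in `δ` and exceeds `1` at `δ₁`.
The first branch is exactly `1 + 4 r² ≤ E δ`. Up to the common positive factor `σn² / (2 Q)`,
both branches are logarithms: of `(E - 1) / (2 r²)`, increasing in `E` and at least `2` on its
range, and of `1 + (E - 1) / (4 r²)`, increasing in `E` and in `(1, 2)` on its range. So the
value is monotone on each branch and the two branches meet at `log 2`.
-/

/-- The threshold condition on `ε`, expressed through the exponential in the two branches. -/
lemma branch_iff (T : ℕ) (hT : 1 ≤ T) (r ε L : ℝ) :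
    T * Real.log (1 + 4 * r ^ 2) + L ≤ ε ↔
      1 + 4 * r ^ 2 ≤ Real.exp ((ε - L) / T) := by
  have hT' : (0 : ℝ) < T := by exact_mod_cast hT
  rw [← Real.log_le_iff_le_exp (by positivity), le_div_iff₀ hT', mul_comm, le_sub_iff_add_le]

theorem stmt13 (T : ℕ) (hT : 1 ≤ T) (r σn Q ε : ℝ)
    (hr : r ∈ Set.Ioc (0 : ℝ) 1) (hσ : 0 < σn) (hQ : 0 < Q)
    (β : ℝ → ℝ)
    (hβ : ∀ δ : ℝ, β δ =
      if T * Real.log (1 + 4 * r ^ 2) + Real.log (1 / δ) ≤ ε then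
        (σn ^ 2 / 2) *
          Real.log ((Real.exp ((ε - Real.log (1 / δ)) / T) - 1) / (2 * r ^ 2)) / Q
      else
        (σn ^ 2 / 2) *
          Real.log ((Real.exp ((ε - Real.log (1 / δ)) / T) - (1 - 4 * r ^ 2)) / (4 * r ^ 2)) / Q) :
    ∀ δ₁ δ₂ : ℝ, 0 < δ₁ → δ₁ ≤ δ₂ → δ₂ < 1 → Real.log (1 / δ₁) < ε → β δ₁ ≤ β δ₂ := by
  intro δ₁ δ₂ h1 h12 _ hε
  have hr2 : 0 < r ^ 2 := pow_pos hr.1 2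
  have hT' : (0 : ℝ) < T := by exact_mod_cast hT
  have hL : Real.log (1 / δ₂) ≤ Real.log (1 / δ₁) :=
    Real.log_le_log (by have := h1.trans_le h12; positivity) (one_div_le_one_div_of_le h1 h12)
  have hE : Real.exp ((ε - Real.log (1 / δ₁)) / T) ≤ Real.exp ((ε - Real.log (1 / δ₂)) / T) := by
    gcongr
  have hE1 : 1 < Real.exp ((ε - Real.log (1 / δ₁)) / T) :=
    Real.one_lt_exp_iff.2 (div_pos (sub_pos.2 hε) hT')
  rw [hβ δ₁, hβ δ₂]
  simp only [branch_iff T hT]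
  generalize Real.exp ((ε - Real.log (1 / δ₁)) / T) = E₁ at *
  generalize Real.exp ((ε - Real.log (1 / δ₂)) / T) = E₂ at *
  -- The common factor and the logarithm are monotone, so it suffices to compare arguments.
  have key : ∀ x y : ℝ, 0 < x → x ≤ y →
      (σn ^ 2 / 2) * Real.log x / Q ≤ (σn ^ 2 / 2) * Real.log y / Q := by
    intro x y hx hxy
    have := Real.log_le_log hx hxy
    gcongr
  split_ifs with ha hb hb
  · exact key _ _ (div_pos (by linarith) (by positivity)) (by gcongr)
  · exact absurd (ha.trans hE) hb
  · refine key _ _ (div_pos (by linarith) (by positivity)) ?_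
    -- The crossing case: the two arguments are separated by the common boundary value `2`.
    trans 2
    · rw [div_le_iff₀ (by positivity)]; linarith
    · rw [le_div_iff₀ (by positivity)]; linarith
  · exact key _ _ (div_pos (by linarith) (by positivity)) (by gcongr)
end
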